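/- Suppose C_n and D_n are random variables with values in a separable metric space S, C_n is G_n-measurable, D_n is G_∞-measurable, C_n converges stably to a kernel M, and D_n converges stably in the strong sense (with respect to (G_n)) to a kernel N. Then the pair (C_n, D_n) converges stably to the product kernel M × N on S × S. -/

import Mathlib

open MeasureTheory Filter Real
open scoped ENNReal NNReal Topology

/-- `Y n` converges stably to the kernel `N`: for every event `H` of positive
probability, the conditional laws of `Y n` given `H` converge weakly to the
conditional expectation of `N` given `H` (equivalently, in unnormalized form,
`∫_H f(Y n) dμ → ∫_H N(f) dμ` for every bounded continuous `f`). -/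
def StablyTo {Ω : Type*} {m0 : MeasurableSpace Ω} (μ : Measure Ω)
    {S : Type*} [MeasurableSpace S] [TopologicalSpace S]
    (Y : ℕ → Ω → S) (N : Ω → Measure S) : Prop :=
  ∀ H : Set Ω, MeasurableSet H → 0 < μ H →
    ∀ f : BoundedContinuousFunction S ℝ,
      Tendsto (fun n => ∫ ω in H, f (Y n ω) ∂μ) atTop
        (𝓝 (∫ ω in H, ∫ x, f x ∂(N ω) ∂μ))

/-- `Y n` converges to the kernel `N` stably in the strong sense with respect to
the filtration `𝒢`: `E[f(Y n) | 𝒢 n] → N(f)` in probability for every bounded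
continuous `f`. -/
def StablyStrongTo {Ω : Type*} {m0 : MeasurableSpace Ω} (μ : Measure Ω)
    (𝒢 : ℕ → MeasurableSpace Ω)
    {S : Type*} [MeasurableSpace S] [TopologicalSpace S]
    (Y : ℕ → Ω → S) (N : Ω → Measure S) : Prop :=
  ∀ f : BoundedContinuousFunction S ℝ,
    TendstoInMeasure μ (fun n ω => (μ[fun ω' => f (Y n ω')|𝒢 n]) ω) atTop
      (fun ω => ∫ x, f x ∂(N ω))

namespace StabAux

lemma tendsto_integral_mul_sub {Ω : Type*} {m0 : MeasurableSpace Ω} {μ : Measure Ω}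
    [IsProbabilityMeasure μ] {F V : ℕ → Ω → ℝ} {W : Ω → ℝ} {K R : ℝ}
    (hF : ∀ n, AEStronglyMeasurable (F n) μ) (hFb : ∀ n, ∀ᵐ x ∂μ, |F n x| ≤ K)
    (hV : ∀ n, AEStronglyMeasurable (V n) μ) (hVb : ∀ n, ∀ᵐ x ∂μ, |V n x| ≤ R)
    (hW : AEStronglyMeasurable W μ) (hWb : ∀ᵐ x ∂μ, |W x| ≤ R)
    (h : TendstoInMeasure μ V atTop W) :
    Tendsto (fun n => ∫ x, F n x * (V n x - W x) ∂μ) atTop (𝓝 0) := by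
  refine tendsto_of_subseq_tendsto fun ns hns => ?_
  obtain ⟨ms, _, hms⟩ := TendstoInMeasure.exists_seq_tendsto_ae
    (f := fun n => V (ns n)) (fun ε hε => (h ε hε).comp hns)
  refine ⟨ms, ?_⟩
  have hFb' : ∀ᵐ x ∂μ, ∀ n, |F n x| ≤ K := ae_all_iff.2 hFb
  have key := tendsto_integral_of_dominated_convergence (μ := μ)
    (F := fun n x => F (ns (ms n)) x * (V (ns (ms n)) x - W x)) (f := fun _ => (0:ℝ))
    (fun _ => K * (R + R)) (fun n => (hF _).mul ((hV _).sub hW)) (integrable_const _)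
    (fun n => by
      filter_upwards [hFb (ns (ms n)), hVb (ns (ms n)), hWb] with x h1 h2 h3
      rw [Real.norm_eq_abs, abs_mul]
      have : |V (ns (ms n)) x - W x| ≤ R + R := (abs_sub _ _).trans (by linarith)
      exact mul_le_mul h1 this (abs_nonneg _) ((abs_nonneg _).trans h1)) (by
      filter_upwards [hms, hFb'] with x h1 h2
      have h3 : Tendsto (fun n => V (ns (ms n)) x - W x) atTop (𝓝 0) := by
        simpa using h1.sub_const (W x)
      refine squeeze_zero_norm (a := fun n => K * |V (ns (ms n)) x - W x|) (fun n => ?_) ?_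
      · rw [Real.norm_eq_abs, abs_mul]
        exact mul_le_mul_of_nonneg_right (h2 _) (abs_nonneg _)
      · simpa using h3.abs.const_mul K)
  simpa using key

lemma integral_mul_condExp {Ω : Type*} {m m0 : MeasurableSpace Ω} {μ : Measure Ω}
    [IsProbabilityMeasure μ] (hm : m ≤ m0) {A B : Ω → ℝ} (hA : StronglyMeasurable[m] A)
    (hAB : Integrable (A * B) μ) (hB : Integrable B μ) :
    ∫ x, A x * B x ∂μ = ∫ x, A x * (μ[B|m]) x ∂μ := by
  have h1 := condExp_mul_of_stronglyMeasurable_left hA hAB hB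
  have h2 := integral_condExp (μ := μ) hm (f := A * B)
  rw [integral_congr_ae h1] at h2
  exact h2.symm

lemma meas_kernel_integral {Ω S : Type*} {m0 : MeasurableSpace Ω} [MetricSpace S]
    [MeasurableSpace S] [BorelSpace S]
    {M : Ω → Measure S} (hM : Measurable M) (hp : ∀ ω, IsProbabilityMeasure (M ω))
    (f : BoundedContinuousFunction S ℝ) : StronglyMeasurable (fun ω => ∫ x, f x ∂(M ω)) := by
  let κ : ProbabilityTheory.Kernel Ω S := ⟨M, hM⟩
  haveI : ProbabilityTheory.IsMarkovKernel κ := ⟨hp⟩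
  exact (f.continuous.measurable.stronglyMeasurable).integral_kernel (κ := κ)

lemma abs_kernel_integral_le {S : Type*} [MetricSpace S]
    [MeasurableSpace S] (ν : Measure S) [IsProbabilityMeasure ν]
    (f : BoundedContinuousFunction S ℝ) : |∫ x, f x ∂ν| ≤ ‖f‖ := by
  have := norm_integral_le_of_norm_le_const (μ := ν) (f := f) (C := ‖f‖)
    (Eventually.of_forall fun x => f.norm_coe_le_norm x)
  simpa using this

/-- extended test functions -/
lemma tendsto_mul_of_stably {Ω S : Type*} {m0 : MeasurableSpace Ω} {μ : Measure Ω}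
    [IsProbabilityMeasure μ] [MetricSpace S] [MeasurableSpace S] [BorelSpace S]
    {C : ℕ → Ω → S} {M : Ω → Measure S}
    (hM : Measurable M) (hp : ∀ ω, IsProbabilityMeasure (M ω))
    (hCm : ∀ n, Measurable (C n)) (hC : StablyTo μ C M)
    (f : BoundedContinuousFunction S ℝ) {X : Ω → ℝ} (hX : Integrable X μ) :
    Tendsto (fun n => ∫ ω, X ω * f (C n ω) ∂μ) atTop
      (𝓝 (∫ ω, X ω * ∫ x, f x ∂(M ω) ∂μ)) := by
  have hfm : ∀ n, AEStronglyMeasurable (fun ω => f (C n ω)) μ := fun n =>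
    (f.continuous.measurable.comp (hCm n)).aestronglyMeasurable
  have hMm : AEStronglyMeasurable (fun ω => ∫ x, f x ∂(M ω)) μ :=
    (meas_kernel_integral hM hp f).aestronglyMeasurable
  have hMb : ∀ ω, ‖∫ x, f x ∂(M ω)‖ ≤ ‖f‖ := fun ω => by
    haveI := hp ω
    exact abs_kernel_integral_le (M ω) f
  have hi1 : ∀ {Y : Ω → ℝ}, Integrable Y μ → ∀ n, Integrable (fun ω => Y ω * f (C n ω)) μ :=
    fun hY n => hY.mul_bdd (hfm n) (Eventually.of_forall fun ω => f.norm_coe_le_norm _)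
  have hi2 : ∀ {Y : Ω → ℝ}, Integrable Y μ → Integrable (fun ω => Y ω * ∫ x, f x ∂(M ω)) μ :=
    fun hY => hY.mul_bdd hMm (Eventually.of_forall hMb)
  refine Integrable.induction (P := fun X : Ω → ℝ =>
    Tendsto (fun n => ∫ ω, X ω * f (C n ω) ∂μ) atTop
      (𝓝 (∫ ω, X ω * ∫ x, f x ∂(M ω) ∂μ))) ?_ ?_ ?_ ?_ hX
  · intro c s hs _
    have e : ∀ g : Ω → ℝ, ∫ ω, s.indicator (fun _ => c) ω * g ω ∂μ = c * ∫ ω in s, g ω ∂μ := by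
      intro g
      rw [← integral_const_mul, ← integral_indicator hs]
      congr 1; ext ω
      by_cases h : ω ∈ s <;> simp [h]
    simp only [e]
    rcases eq_or_ne (μ s) 0 with h0 | h0
    · simp [Measure.restrict_eq_zero.2 h0]
    · exact (hC s hs (pos_iff_ne_zero.2 h0) f).const_mul c
  · intro g h _ hg hh h1 h2
    simp only [Pi.add_apply, add_mul]
    rw [integral_add (hi2 hg) (hi2 hh)]
    refine (h1.add h2).congr fun n => ?_
    rw [integral_add (hi1 hg n) (hi1 hh n)]
  · refine isClosed_of_closure_subset fun X hXc => ?_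
    rw [Set.mem_setOf_eq, Metric.tendsto_atTop]
    intro ε hε
    set δ := ε / (4 * (‖f‖ + 1)) with hδ
    have hf0 : 0 ≤ ‖f‖ := norm_nonneg _
    have hδ0 : 0 < δ := by positivity
    obtain ⟨Y, hY, hXY⟩ := Metric.mem_closure_iff.1 hXc δ hδ0
    obtain ⟨N, hN⟩ := Metric.tendsto_atTop.1 hY (ε / 2) (by positivity)
    have hb : ∀ g : Ω → ℝ, AEStronglyMeasurable g μ → (∀ ω, ‖g ω‖ ≤ ‖f‖) →
        |∫ ω, X ω * g ω ∂μ - ∫ ω, Y ω * g ω ∂μ| ≤ ε / 4 := by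
      intro g hg hgb
      have iX := L1.integrable_coeFn X
      have iY := L1.integrable_coeFn Y
      rw [← integral_sub (iX.mul_bdd hg (Eventually.of_forall hgb))
        (iY.mul_bdd hg (Eventually.of_forall hgb))]
      have : ‖∫ ω, (X ω * g ω - Y ω * g ω) ∂μ‖ ≤ ∫ ω, ‖X ω - Y ω‖ * ‖f‖ ∂μ := by
        refine norm_integral_le_of_norm_le ((iX.sub iY).norm.mul_const _)
          (Eventually.of_forall fun ω => ?_)
        rw [← sub_mul, norm_mul]
        exact mul_le_mul_of_nonneg_left (hgb ω) (norm_nonneg _)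
      rw [integral_mul_const] at this
      have h2 : ∫ ω, ‖X ω - Y ω‖ ∂μ = dist X Y := by
        rw [dist_eq_norm, L1.norm_eq_integral_norm]
        refine integral_congr_ae ?_
        filter_upwards [Lp.coeFn_sub X Y] with ω hω
        rw [hω]; rfl
      rw [h2] at this
      refine this.trans ?_
      calc dist X Y * ‖f‖ ≤ δ * (‖f‖ + 1) :=
            mul_le_mul hXY.le (by linarith) hf0 hδ0.le
        _ = ε / 4 := by rw [hδ]; field_simp
    refine ⟨N, fun n hn => ?_⟩
    have a1 := hb _ (hfm n) (fun ω => f.norm_coe_le_norm _)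
    have a2 := hb _ hMm hMb
    have a3 := hN n hn
    rw [Real.dist_eq] at a3 ⊢
    rw [abs_lt] at *
    rw [abs_le] at a1 a2
    constructor <;> linarith [a1.1, a1.2, a2.1, a2.2, a3.1, a3.2]
  · intro g h hgh _ hg
    have e : ∀ k : Ω → ℝ, ∫ ω, g ω * k ω ∂μ = ∫ ω, h ω * k ω ∂μ := fun k =>
      integral_congr_ae (by filter_upwards [hgh] with ω hω; rw [hω])
    simpa only [e] using hg

lemma tendsto_prod_test {Ω : Type*} {m0 : MeasurableSpace Ω} {μ : Measure Ω}
    [IsProbabilityMeasure μ]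
    {S : Type*} [MetricSpace S] [MeasurableSpace S] [BorelSpace S]
    (𝒢 : ℕ → MeasurableSpace Ω) (h𝒢mono : Monotone 𝒢) (h𝒢le : ∀ n, 𝒢 n ≤ m0)
    (C D : ℕ → Ω → S) (M N : Ω → Measure S)
    (hMkernel : Measurable M) (hNkernel : Measurable N)
    (hMprob : ∀ ω, IsProbabilityMeasure (M ω)) (hNprob : ∀ ω, IsProbabilityMeasure (N ω))
    (hCmeas : ∀ n, Measurable[𝒢 n] (C n))
    (hDmeas : ∀ n, Measurable[⨆ k, 𝒢 k] (D n))
    (hC : StablyTo μ C M)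
    (hD : StablyStrongTo μ 𝒢 D N) (H : Set Ω) (hH : MeasurableSet H)
    (f g : BoundedContinuousFunction S ℝ) :
    Tendsto (fun n => ∫ ω in H, f (C n ω) * g (D n ω) ∂μ) atTop
      (𝓝 (∫ ω in H, (∫ x, f x ∂(M ω)) * (∫ x, g x ∂(N ω)) ∂μ)) := by
  have hsup : (⨆ k, 𝒢 k) ≤ m0 := iSup_le h𝒢le
  set h : Ω → ℝ := H.indicator (fun _ => 1) with hh
  have hhm : StronglyMeasurable h := stronglyMeasurable_const.indicator hH
  have hhb : ∀ ω, |h ω| ≤ 1 := fun ω => by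
    by_cases hω : ω ∈ H <;> simp [hh, hω]
  have hhi : Integrable h μ := (integrable_const (1:ℝ)).indicator hH
  have e : ∀ k : Ω → ℝ, ∫ ω in H, k ω ∂μ = ∫ ω, h ω * k ω ∂μ := by
    intro k
    rw [← integral_indicator hH]
    congr 1; ext ω
    by_cases hω : ω ∈ H <;> simp [hh, hω]
  simp only [e]
  -- measurability facts
  have fC : ∀ n, StronglyMeasurable[𝒢 n] (fun ω => f (C n ω)) := fun n =>
    (f.continuous.measurable.comp (hCmeas n)).stronglyMeasurable
  have gD : ∀ n, StronglyMeasurable[⨆ k, 𝒢 k] (fun ω => g (D n ω)) := fun n =>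
    (g.continuous.measurable.comp (hDmeas n)).stronglyMeasurable
  have fC0 : ∀ n, StronglyMeasurable (fun ω => f (C n ω)) := fun n => (fC n).mono (h𝒢le n)
  have gD0 : ∀ n, StronglyMeasurable (fun ω => g (D n ω)) := fun n => (gD n).mono hsup
  have fb : ∀ n ω, |f (C n ω)| ≤ ‖f‖ := fun n ω => f.norm_coe_le_norm _
  have gb : ∀ n ω, |g (D n ω)| ≤ ‖g‖ := fun n ω => g.norm_coe_le_norm _
  have gi : ∀ n, Integrable (fun ω => g (D n ω)) μ := fun n =>
    Integrable.of_bound (gD0 n).aestronglyMeasurable ‖g‖ (Eventually.of_forall (gb n))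
  have Ngm := meas_kernel_integral hNkernel hNprob g
  have Ngb : ∀ ω, |∫ x, g x ∂(N ω)| ≤ ‖g‖ := fun ω => by
    haveI := hNprob ω
    exact abs_kernel_integral_le (N ω) g
  set Z : ℕ → Ω → ℝ := fun n => μ[h|𝒢 n] with hZ
  set Zi : Ω → ℝ := μ[h|⨆ k, 𝒢 k] with hZi
  set W : ℕ → Ω → ℝ := fun n => μ[fun ω => g (D n ω)|𝒢 n] with hW
  have Zm : ∀ n, StronglyMeasurable[𝒢 n] (Z n) := fun n => stronglyMeasurable_condExp
  have Zim : StronglyMeasurable[⨆ k, 𝒢 k] Zi := stronglyMeasurable_condExp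
  have Wm : ∀ n, StronglyMeasurable[𝒢 n] (W n) := fun n => stronglyMeasurable_condExp
  have Zb : ∀ n, ∀ᵐ ω ∂μ, |Z n ω| ≤ 1 := fun n =>
    ae_bdd_condExp_of_ae_bdd (R := 1) (Eventually.of_forall hhb)
  have Zib : ∀ᵐ ω ∂μ, |Zi ω| ≤ 1 :=
    ae_bdd_condExp_of_ae_bdd (R := 1) (Eventually.of_forall hhb)
  have Wb : ∀ n, ∀ᵐ ω ∂μ, |W n ω| ≤ ‖g‖ := fun n =>
    ae_bdd_condExp_of_ae_bdd (R := ‖g‖₊) (Eventually.of_forall (gb n))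
  have Zt : TendstoInMeasure μ Z atTop Zi := by
    let ℱ : Filtration ℕ m0 := ⟨𝒢, h𝒢mono, h𝒢le⟩
    exact tendstoInMeasure_of_tendsto_eLpNorm one_ne_zero
      (fun n => ((Zm n).mono (h𝒢le n)).aestronglyMeasurable)
      (Zim.mono hsup).aestronglyMeasurable (tendsto_eLpNorm_condExp (ℱ := ℱ) h)
  have fgm : ∀ n, AEStronglyMeasurable (fun ω => f (C n ω) * g (D n ω)) μ := fun n =>
    ((fC0 n).mul (gD0 n)).aestronglyMeasurable
  have fgb : ∀ n ω, |f (C n ω) * g (D n ω)| ≤ ‖f‖ * ‖g‖ := fun n ω => by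
    rw [abs_mul]
    exact mul_le_mul (fb n ω) (gb n ω) (abs_nonneg _) (norm_nonneg _)
  have t1 := tendsto_integral_mul_sub fgm (fun n => Eventually.of_forall (fgb n))
    (fun n => ((Zm n).mono (h𝒢le n)).aestronglyMeasurable) Zb
    (Zim.mono hsup).aestronglyMeasurable Zib Zt
  have hfm : ∀ n, AEStronglyMeasurable (fun ω => h ω * f (C n ω)) μ := fun n =>
    (hhm.mul (fC0 n)).aestronglyMeasurable
  have hfb : ∀ n ω, |h ω * f (C n ω)| ≤ 1 * ‖f‖ := fun n ω => by
    rw [abs_mul]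
    exact mul_le_mul (hhb ω) (fb n ω) (abs_nonneg _) zero_le_one
  have t2 := tendsto_integral_mul_sub hfm (fun n => Eventually.of_forall (hfb n))
    (fun n => ((Wm n).mono (h𝒢le n)).aestronglyMeasurable) Wb
    Ngm.aestronglyMeasurable (Eventually.of_forall Ngb) (hD g)
  have hNi : Integrable (fun ω => h ω * ∫ x, g x ∂(N ω)) μ :=
    hhi.mul_bdd Ngm.aestronglyMeasurable (Eventually.of_forall Ngb)
  have t3 := tendsto_mul_of_stably hMkernel hMprob (fun n => (hCmeas n).mono (h𝒢le n) le_rfl)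
    hC f hNi
  have t4 := (t3.add t2).sub t1
  have lim_eq : (∫ ω, (h ω * ∫ x, g x ∂(N ω)) * ∫ x, f x ∂(M ω) ∂μ) + 0 - 0
      = ∫ ω, h ω * ((∫ x, f x ∂(M ω)) * (∫ x, g x ∂(N ω))) ∂μ := by
    rw [add_zero, sub_zero]
    congr 1; ext ω; ring
  rw [lim_eq] at t4
  refine t4.congr fun n => ?_
  have Wi : Integrable (W n) μ := integrable_condExp
  have fgi : Integrable (fun ω => f (C n ω) * g (D n ω)) μ :=
    Integrable.of_bound (fgm n) _ (Eventually.of_forall (fgb n))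
  have Zi1 : Integrable (Z n) μ := integrable_condExp
  have Zi2 : Integrable Zi μ := integrable_condExp
  -- the four identities
  have i1 : ∫ ω, h ω * (f (C n ω) * g (D n ω)) ∂μ = ∫ ω, (f (C n ω) * g (D n ω)) * Zi ω ∂μ := by
    rw [← integral_mul_condExp hsup (A := fun ω => f (C n ω) * g (D n ω)) (B := h)
      (((fC n).mono (le_iSup 𝒢 n)).mul (gD n))
      (hhi.bdd_mul (fgm n) (Eventually.of_forall (fgb n))) hhi]
    congr 1; ext ω; ring
  have i2 : ∫ ω, (f (C n ω) * g (D n ω)) * Z n ω ∂μ = ∫ ω, (f (C n ω) * Z n ω) * W n ω ∂μ := by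
    rw [← integral_mul_condExp (h𝒢le n) (A := fun ω => f (C n ω) * Z n ω)
      (B := fun ω => g (D n ω)) ((fC n).mul (Zm n)) ?_ (gi n)]
    · congr 1; ext ω; ring
    · refine (Zi1.bdd_mul (fgm n) (Eventually.of_forall (fgb n))).congr
        (Eventually.of_forall fun ω => ?_)
      simp only [Pi.mul_apply]; ring
  have fWi : Integrable (fun ω => f (C n ω) * W n ω) μ :=
    Wi.bdd_mul (fC0 n).aestronglyMeasurable (Eventually.of_forall (fb n))
  have hfWi : Integrable (fun ω => (f (C n ω) * W n ω) * h ω) μ :=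
    fWi.mul_bdd hhm.aestronglyMeasurable (Eventually.of_forall hhb)
  have i3 : ∫ ω, (f (C n ω) * Z n ω) * W n ω ∂μ = ∫ ω, (h ω * f (C n ω)) * W n ω ∂μ := by
    have := integral_mul_condExp (h𝒢le n) (A := fun ω => f (C n ω) * W n ω)
      (B := h) ((fC n).mul (Wm n)) hfWi hhi
    calc _ = ∫ ω, (f (C n ω) * W n ω) * Z n ω ∂μ := by congr 1; ext ω; ring
      _ = ∫ ω, (f (C n ω) * W n ω) * h ω ∂μ := this.symm
      _ = _ := by congr 1; ext ω; ring
  have s1 : ∫ ω, (f (C n ω) * g (D n ω)) * (Z n ω - Zi ω) ∂μ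
      = ∫ ω, (f (C n ω) * g (D n ω)) * Z n ω ∂μ - ∫ ω, (f (C n ω) * g (D n ω)) * Zi ω ∂μ := by
    simp only [mul_sub]
    exact integral_sub (Zi1.bdd_mul (fgm n) (Eventually.of_forall (fgb n)))
      (Zi2.bdd_mul (fgm n) (Eventually.of_forall (fgb n)))
  have s2 : ∫ ω, (h ω * f (C n ω)) * (W n ω - ∫ x, g x ∂(N ω)) ∂μ
      = ∫ ω, (h ω * f (C n ω)) * W n ω ∂μ
        - ∫ ω, (h ω * ∫ x, g x ∂(N ω)) * f (C n ω) ∂μ := by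
    rw [← integral_sub (Wi.bdd_mul (hfm n) (Eventually.of_forall (hfb n)))
      (hNi.mul_bdd (fC0 n).aestronglyMeasurable (Eventually.of_forall (fb n)))]
    congr 1; ext ω; ring
  have s2' : ∫ ω, (h ω * f (C n ω)) * ((μ[fun ω => g (D n ω)|𝒢 n]) ω - ∫ x, g x ∂(N ω)) ∂μ
      = _ := s2
  rw [s1, s2', i1, i2, i3]
  ring

/-- tent function -/
noncomputable def tent {S : Type*} [MetricSpace S] (p : S) (r : ℝ) :
    BoundedContinuousFunction S ℝ :=
  BoundedContinuousFunction.ofNormedAddCommGroup (fun x => max 0 (min 1 (r - dist x p)))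
    (by fun_prop) 1 (by
      intro x
      rw [Real.norm_eq_abs, abs_le]
      constructor
      · linarith [le_max_left 0 (min 1 (r - dist x p))]
      · exact max_le zero_le_one (min_le_left _ _))

lemma tent_nonneg {S : Type*} [MetricSpace S] (p : S) (r : ℝ) (x : S) : 0 ≤ tent p r x :=
  le_max_left _ _

lemma tent_le_one {S : Type*} [MetricSpace S] (p : S) (r : ℝ) (x : S) : tent p r x ≤ 1 :=
  max_le zero_le_one (min_le_left _ _)

lemma tent_pos {S : Type*} [MetricSpace S] (p : S) (r : ℝ) (x : S) :
    0 < tent p r x ↔ dist x p < r := by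
  change 0 < max 0 (min 1 (r - dist x p)) ↔ _
  simp [lt_max_iff]

/-- the product test function -/
noncomputable def tens {S : Type*} [MetricSpace S] (f g : BoundedContinuousFunction S ℝ) :
    BoundedContinuousFunction (S × S) ℝ :=
  f.compContinuous ⟨Prod.fst, continuous_fst⟩ * g.compContinuous ⟨Prod.snd, continuous_snd⟩

@[simp] lemma tens_apply {S : Type*} [MetricSpace S] (f g : BoundedContinuousFunction S ℝ)
    (z : S × S) : tens f g z = f z.1 * g z.2 := rfl

/-- product test functions as a monoid -/
noncomputable def tensMonoid (S : Type*) [MetricSpace S] :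
    Submonoid (BoundedContinuousFunction (S × S) ℝ) where
  carrier := {h | ∃ f g, h = tens f g}
  mul_mem' := by
    rintro _ _ ⟨f, g, rfl⟩ ⟨f', g', rfl⟩
    exact ⟨f * f', g * g', by ext z; simp; ring⟩
  one_mem' := ⟨1, 1, by ext z; simp⟩

lemma tendsto_of_tens {S : Type*} [MetricSpace S] [TopologicalSpace.SeparableSpace S]
    [MeasurableSpace S] [BorelSpace S]
    (P : ℕ → ProbabilityMeasure (S × S)) (Q : ProbabilityMeasure (S × S))
    (hPQ : ∀ f g : BoundedContinuousFunction S ℝ,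
      Tendsto (fun n => ∫ z, f z.1 * g z.2 ∂(P n : Measure (S × S))) atTop
        (𝓝 (∫ z, f z.1 * g z.2 ∂(Q : Measure (S × S))))) :
    Tendsto P atTop (𝓝 Q) := by
  have : SecondCountableTopology S := UniformSpace.secondCountable_of_separable S
  set A := Algebra.adjoin ℝ ((tensMonoid S : Set (BoundedContinuousFunction (S × S) ℝ))) with hA
  have hconv : ∀ h ∈ A, Tendsto (fun n => ∫ z, h z ∂(P n : Measure (S × S))) atTop
        (𝓝 (∫ z, h z ∂(Q : Measure (S × S)))) := by
    intro h hh
    rw [← Subalgebra.mem_toSubmodule, hA, Algebra.adjoin_eq_span, Submonoid.closure_eq] at hh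
    induction hh using Submodule.span_induction with
    | mem x hx =>
      obtain ⟨f, g, rfl⟩ := hx
      exact hPQ f g
    | zero => simp
    | add x y _ _ hx hy =>
      simp only [BoundedContinuousFunction.coe_add, Pi.add_apply]
      rw [integral_add (x.integrable _) (y.integrable _)]
      refine (hx.add hy).congr fun n => ?_
      rw [integral_add (x.integrable _) (y.integrable _)]
    | smul a x _ hx =>
      simp only [BoundedContinuousFunction.coe_smul, smul_eq_mul, integral_const_mul]
      exact hx.const_mul a
  refine tendsto_of_forall_isOpen_le_liminf' fun G hG => ?_
  rcases G.eq_empty_or_nonempty with rfl | hne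
  · simp
  -- local tents
  have hloc : ∀ p : G, ∃ r > 0, ∀ z : S × S, dist z.1 p.1.1 < r → dist z.2 p.1.2 < r → z ∈ G := by
    rintro ⟨p, hp⟩
    obtain ⟨r, hr, hb⟩ := Metric.isOpen_iff.1 hG p hp
    refine ⟨r, hr, fun z h1 h2 => hb ?_⟩
    rw [Metric.mem_ball, Prod.dist_eq]
    exact max_lt h1 h2
  choose r hr hrG using hloc
  let φ : G → BoundedContinuousFunction (S × S) ℝ := fun p =>
    tens (tent p.1.1 (r p)) (tent p.1.2 (r p))
  have φ0 : ∀ p z, 0 ≤ φ p z := fun p z => mul_nonneg (tent_nonneg _ _ _) (tent_nonneg _ _ _)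
  have φ1 : ∀ p z, φ p z ≤ 1 := fun p z =>
    mul_le_one₀ (tent_le_one _ _ _) (tent_nonneg _ _ _) (tent_le_one _ _ _)
  have φG : ∀ p z, z ∉ G → φ p z = 0 := by
    intro p z hz
    by_contra hne0
    have h1 : tent p.1.1 (r p) z.1 ≠ 0 := left_ne_zero_of_mul hne0
    have h2 : tent p.1.2 (r p) z.2 ≠ 0 := right_ne_zero_of_mul hne0
    exact hz (hrG p z ((tent_pos _ _ _).1 (lt_of_le_of_ne (tent_nonneg _ _ _) h1.symm))
      ((tent_pos _ _ _).1 (lt_of_le_of_ne (tent_nonneg _ _ _) h2.symm)))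
  have φp : ∀ p : G, 0 < φ p p.1 := fun p =>
    mul_pos ((tent_pos _ _ _).2 (by simpa using hr p)) ((tent_pos _ _ _).2 (by simpa using hr p))
  obtain ⟨T, hTc, hT⟩ := TopologicalSpace.isOpen_iUnion_countable (fun p : G => {z | 0 < φ p z})
    (fun p => isOpen_lt continuous_const (φ p).continuous)
  have hcov : ∀ z ∈ G, ∃ p ∈ T, 0 < φ p z := by
    intro z hz
    have : z ∈ ⋃ p : G, {z | 0 < φ p z} := Set.mem_iUnion.2 ⟨⟨z, hz⟩, φp ⟨z, hz⟩⟩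
    rw [← hT] at this
    simpa using this
  have hTne : T.Nonempty := by
    obtain ⟨z, hz⟩ := hne
    obtain ⟨p, hp, _⟩ := hcov z hz
    exact ⟨p, hp⟩
  obtain ⟨t, rfl⟩ := hTc.exists_eq_range hTne
  let u : ℕ → BoundedContinuousFunction (S × S) ℝ := fun k =>
    1 - ∏ i ∈ Finset.range k, (1 - φ (t i)) ^ k
  have uA : ∀ k, u k ∈ A := fun k =>
    A.sub_mem A.one_mem (A.prod_mem fun i _ => A.pow_mem (A.sub_mem A.one_mem
      (Algebra.subset_adjoin ⟨_, _, rfl⟩)) k)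
  have u_apply : ∀ k z, u k z = 1 - ∏ i ∈ Finset.range k, (1 - φ (t i) z) ^ k := by
    intro k z
    simp [u, BoundedContinuousFunction.coe_prod]
  have q0 : ∀ (k i : ℕ) z, 0 ≤ (1 - φ (t i) z) ^ k := fun k i z =>
    pow_nonneg (by linarith [φ1 (t i) z]) k
  have q1 : ∀ (k i : ℕ) z, (1 - φ (t i) z) ^ k ≤ 1 := fun k i z =>
    pow_le_one₀ (by linarith [φ1 (t i) z]) (by linarith [φ0 (t i) z])
  have u1 : ∀ k z, u k z ≤ 1 := fun k z => by
    rw [u_apply]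
    linarith [Finset.prod_nonneg (s := Finset.range k) fun i _ => q0 k i z]
  have u0 : ∀ k z, 0 ≤ u k z := fun k z => by
    rw [u_apply]
    linarith [Finset.prod_le_one (s := Finset.range k) (fun i _ => q0 k i z) fun i _ => q1 k i z]
  have uG : ∀ k z, z ∉ G → u k z = 0 := fun k z hz => by
    rw [u_apply]; simp [φG _ z hz]
  have ulim : ∀ z, Tendsto (fun k => u k z) atTop (𝓝 (G.indicator (fun _ => (1:ℝ)) z)) := by
    intro z
    by_cases hz : z ∈ G
    · obtain ⟨_, ⟨j, rfl⟩, hj⟩ := hcov z hz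
      simp only [Set.indicator_of_mem hz, u_apply]
      have h1 : Tendsto (fun k : ℕ => (1 - φ (t j) z) ^ k) atTop (𝓝 0) :=
        tendsto_pow_atTop_nhds_zero_of_lt_one (by linarith [φ1 (t j) z]) (by linarith)
      have h2 : Tendsto (fun k : ℕ => ∏ i ∈ Finset.range k, (1 - φ (t i) z) ^ k) atTop (𝓝 0) := by
        refine squeeze_zero' (Eventually.of_forall fun k => Finset.prod_nonneg fun i _ => q0 k i z)
          ?_ h1
        filter_upwards [eventually_gt_atTop j] with k hk
        rw [← Finset.mul_prod_erase _ _ (Finset.mem_range.2 hk)]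
        exact mul_le_of_le_one_right (q0 k j z)
          (Finset.prod_le_one (fun i _ => q0 k i z) fun i _ => q1 k i z)
      simpa using h2.const_sub 1
    · simp [uG _ z hz, hz]
  have uint : ∀ (k : ℕ) (R : ProbabilityMeasure (S × S)),
      ∫ z, u k z ∂(R : Measure (S × S)) ≤ (R : Measure (S × S)).real G := by
    intro k R
    rw [← integral_indicator_one hG.measurableSet]
    refine integral_mono ((u k).integrable _)
      ((integrable_const (1:ℝ)).indicator hG.measurableSet) fun z => ?_
    by_cases hz : z ∈ G
    · simpa [hz] using u1 k z
    · simp [hz, uG k z hz]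
  have Qlim : Tendsto (fun k => ∫ z, u k z ∂(Q : Measure (S × S))) atTop
      (𝓝 ((Q : Measure (S × S)).real G)) := by
    rw [← integral_indicator_one hG.measurableSet]
    refine tendsto_integral_of_dominated_convergence (fun _ => (1:ℝ))
      (fun k => (u k).continuous.measurable.aestronglyMeasurable) (integrable_const _)
      (fun k => Eventually.of_forall fun z => ?_) (Eventually.of_forall ulim)
    rw [Real.norm_eq_abs, abs_of_nonneg (u0 k z)]
    exact u1 k z
  refine le_of_forall_lt fun c hc => ?_
  obtain ⟨c', hcc', hc'⟩ := exists_between hc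
  have hc'top : c' ≠ ∞ := (hc'.trans_le le_top).ne
  have h3 : c'.toReal < (Q : Measure (S × S)).real G :=
    (ENNReal.toReal_lt_toReal hc'top (measure_ne_top _ _)).2 hc'
  obtain ⟨k, hk⟩ := (Qlim.eventually (lt_mem_nhds h3)).exists
  refine hcc'.trans_le (le_liminf_of_le (by isBoundedDefault) ?_)
  filter_upwards [(hconv _ (uA k)).eventually (lt_mem_nhds hk)] with n hn
  have h4 := hn.trans_le (uint k (P n))
  exact ((ENNReal.toReal_lt_toReal hc'top (measure_ne_top _ _)).1 h4).le

end StabAux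

theorem stmt3
    {Ω : Type*} {m0 : MeasurableSpace Ω} {μ : Measure Ω} [IsProbabilityMeasure μ]
    {S : Type*} [MetricSpace S] [TopologicalSpace.SeparableSpace S]
    [MeasurableSpace S] [BorelSpace S]
    (𝒢 : ℕ → MeasurableSpace Ω) (h𝒢mono : Monotone 𝒢) (h𝒢le : ∀ n, 𝒢 n ≤ m0)
    (C D : ℕ → Ω → S) (M N : Ω → Measure S)
    (hMkernel : Measurable M) (hNkernel : Measurable N)
    (hMprob : ∀ ω, IsProbabilityMeasure (M ω)) (hNprob : ∀ ω, IsProbabilityMeasure (N ω))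
    (hCmeas : ∀ n, Measurable[𝒢 n] (C n))
    (hDmeas : ∀ n, Measurable[⨆ k, 𝒢 k] (D n))
    (hC : StablyTo μ C M)
    (hD : StablyStrongTo μ 𝒢 D N) :
    StablyTo μ (fun n ω => (C n ω, D n ω)) (fun ω => (M ω).prod (N ω)) := by
  intro H hH hH0 F
  have : SecondCountableTopology S := UniformSpace.secondCountable_of_separable S
  have hsup : (⨆ k, 𝒢 k) ≤ m0 := iSup_le h𝒢le
  have hYm : ∀ n, Measurable (fun ω => (C n ω, D n ω)) := fun n =>
    ((hCmeas n).mono (h𝒢le n) le_rfl).prodMk ((hDmeas n).mono hsup le_rfl)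
  let κM : ProbabilityTheory.Kernel Ω S := ⟨M, hMkernel⟩
  let κN : ProbabilityTheory.Kernel Ω S := ⟨N, hNkernel⟩
  have iM : ProbabilityTheory.IsMarkovKernel κM := ⟨hMprob⟩
  have iN : ProbabilityTheory.IsMarkovKernel κN := ⟨hNprob⟩
  let κ : ProbabilityTheory.Kernel Ω (S × S) := ProbabilityTheory.Kernel.prod κM κN
  have hκ : ∀ ω, κ ω = (M ω).prod (N ω) := fun ω => ProbabilityTheory.Kernel.prod_apply κM κN ω
  let m : Measure Ω := ProbabilityTheory.cond μ H
  have im : IsProbabilityMeasure m := ProbabilityTheory.cond_isProbabilityMeasure hH0.ne'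
  have hm : ∀ k : Ω → ℝ, ∫ ω, k ω ∂m = ((μ H)⁻¹).toReal * ∫ ω in H, k ω ∂μ := by
    intro k
    simp only [m, ProbabilityTheory.cond, integral_smul_measure, smul_eq_mul]
  have hc0 : ((μ H)⁻¹).toReal ≠ 0 :=
    ENNReal.toReal_ne_zero.2 ⟨ENNReal.inv_ne_zero.2 (measure_ne_top _ _),
      ENNReal.inv_ne_top.2 hH0.ne'⟩
  let P : ℕ → ProbabilityMeasure (S × S) := fun n =>
    ⟨m.map (fun ω => (C n ω, D n ω)), Measure.isProbabilityMeasure_map (hYm n).aemeasurable⟩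
  let Q : ProbabilityMeasure (S × S) :=
    ⟨(m.compProd κ).map Prod.snd, Measure.isProbabilityMeasure_map measurable_snd.aemeasurable⟩
  have hP : ∀ n (h : BoundedContinuousFunction (S × S) ℝ), ∫ z, h z ∂(P n : Measure (S × S))
      = ((μ H)⁻¹).toReal * ∫ ω in H, h (C n ω, D n ω) ∂μ := by
    intro n h
    rw [← hm]
    exact integral_map (hYm n).aemeasurable h.continuous.measurable.aestronglyMeasurable
  have hQ : ∀ h : BoundedContinuousFunction (S × S) ℝ, ∫ z, h z ∂(Q : Measure (S × S))
      = ((μ H)⁻¹).toReal * ∫ ω in H, ∫ z, h z ∂((M ω).prod (N ω)) ∂μ := by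
    intro h
    rw [← hm]
    have e1 : ∫ z, h z ∂(Q : Measure (S × S)) = ∫ y, h y.2 ∂(m.compProd κ) :=
      integral_map measurable_snd.aemeasurable h.continuous.measurable.aestronglyMeasurable
    rw [e1, Measure.integral_compProd]
    · simp only [hκ]
    · exact Integrable.of_bound
        (h.continuous.measurable.comp measurable_snd).aestronglyMeasurable ‖h‖
        (Eventually.of_forall fun y => h.norm_coe_le_norm _)
  have key : Tendsto P atTop (𝓝 Q) := by
    refine StabAux.tendsto_of_tens P Q fun f g => ?_
    have h1 := StabAux.tendsto_prod_test 𝒢 h𝒢mono h𝒢le C D M N hMkernel hNkernel hMprob hNprob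
      hCmeas hDmeas hC hD H hH f g
    have h2 := hQ (StabAux.tens f g)
    have h3 := fun n => hP n (StabAux.tens f g)
    simp only [StabAux.tens_apply, integral_prod_mul (f := f) (g := g)] at h2 h3
    simp only [h2, h3]
    exact h1.const_mul _
  have fin := ProbabilityMeasure.tendsto_iff_forall_integral_tendsto.1 key F
  simp only [hP, hQ] at fin
  have := fin.const_mul (((μ H)⁻¹).toReal)⁻¹
  simpa only [inv_mul_cancel_left₀ hc0] using this
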